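/- Let 0 < θ ≤ π/4, let a, b ∈ M_3(ℂ) be positive semidefinite with ⟨ψ_i, (a⊗b) ψ_i⟩ ≠ 0 for each of the nine states ψ_i of S_3(θ), and let δ be the disturbance of a⊗b on S_3(θ). Fix any s ≥ 3 and define 1/r(s) := min{ (1/14)(1/3 − 1/s), (1/(2(1+√2·s)))(1/3 − 1/s) }. If δ/sin 2θ ≤ 1/r(s), then a_{11} ≥ (1/s)·‖a‖_∞ and b_{11} ≥ (1/s)·‖b‖_∞. -/

import Mathlib

open Matrix Kronecker
open scoped ComplexOrder

/-- The disturbance `δ` of the product operator `a ⊗ b` on the family of states `ψ`. -/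
noncomputable def disturbance {n dA dB : ℕ} (ψ : Fin n → Fin dA × Fin dB → ℂ)
    (a : Matrix (Fin dA) (Fin dA) ℂ) (b : Matrix (Fin dB) (Fin dB) ℂ) : ℝ :=
  ⨆ p : {q : Fin n × Fin n // q.1 ≠ q.2},
    ‖star (ψ p.1.1) ⬝ᵥ (a ⊗ₖ b).mulVec (ψ p.1.2)‖ /
      Real.sqrt ((star (ψ p.1.1) ⬝ᵥ (a ⊗ₖ b).mulVec (ψ p.1.1)).re *
        (star (ψ p.1.2) ⬝ᵥ (a ⊗ₖ b).mulVec (ψ p.1.2)).re)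

/-- The standard basis vector `|i⟩` of `ℂ³`. -/
noncomputable def e3 (i : Fin 3) : Fin 3 → ℂ := fun k => if k = i then 1 else 0

/-- The product vector `α ⊗ β` in `ℂ³ ⊗ ℂ³`. -/
noncomputable def kp (α β : Fin 3 → ℂ) : Fin 3 × Fin 3 → ℂ := fun p => α p.1 * β p.2

/-- The nine rotated domino states `S₃(θ₁,θ₂,θ₃,θ₄)` in `ℂ³ ⊗ ℂ³`. -/
noncomputable def rotDomino (t1 t2 t3 t4 : ℝ) : Fin 9 → Fin 3 × Fin 3 → ℂ :=
  ![kp (e3 1) (e3 1),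
    kp (e3 0) (fun k => (Real.cos t1 : ℂ) * e3 0 k + (Real.sin t1 : ℂ) * e3 1 k),
    kp (e3 0) (fun k => -(Real.sin t1 : ℂ) * e3 0 k + (Real.cos t1 : ℂ) * e3 1 k),
    kp (e3 2) (fun k => (Real.cos t2 : ℂ) * e3 1 k + (Real.sin t2 : ℂ) * e3 2 k),
    kp (e3 2) (fun k => -(Real.sin t2 : ℂ) * e3 1 k + (Real.cos t2 : ℂ) * e3 2 k),
    kp (fun k => (Real.cos t3 : ℂ) * e3 1 k + (Real.sin t3 : ℂ) * e3 2 k) (e3 0),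
    kp (fun k => -(Real.sin t3 : ℂ) * e3 1 k + (Real.cos t3 : ℂ) * e3 2 k) (e3 0),
    kp (fun k => (Real.cos t4 : ℂ) * e3 0 k + (Real.sin t4 : ℂ) * e3 1 k) (e3 2),
    kp (fun k => -(Real.sin t4 : ℂ) * e3 0 k + (Real.cos t4 : ℂ) * e3 1 k) (e3 2)]

/-- The operator (spectral) norm of a square complex matrix. -/
noncomputable def opNorm {n : ℕ} (M : Matrix (Fin n) (Fin n) ℂ) : ℝ :=
  ‖Matrix.toEuclideanCLM (𝕜 := ℂ) M‖

/-!
In the product `⟨w ⊗ q, (a ⊗ b)(p ⊗ u)⟩ = ⟨w, a p⟩⟨q, b u⟩` the states `w ⊗ q` and `p ⊗ u` of two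
tiles contribute independently, so summing the squared disturbance over the orthonormal bases `w`
and `u` of the two tiles makes the rotation angles disappear. Applied to a tile `|p⟩ ⊗ u` and
either the centre or the neighbouring tile, this gives `|a₁ₚ| ≤ δ tr a` for `p ≠ 1`.

The two states of a single tile with angle `θ` see `a` through
`(sin 2θ / 2)(aⱼⱼ - aᵢᵢ) + cos 2θ Re aᵢⱼ`, so adjacent diagonal entries of `a` differ by at most
`3 (δ / |sin 2θ|) tr a`. Averaging, `a₁₁ ≥ (1/3 - 2 δ / |sin 2θ|) tr a`, and `tr a ≥ ‖a‖`. The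
roles of `a` and `b` are symmetric.
-/

section ResolvesProjection

variable {m κ : Type*} [Fintype κ] [DecidableEq m]

/-- `∑ₖ |v k⟩⟨v k|` is the coordinate projection onto `span {|i⟩ : i ∈ S}`. This encodes that the
vectors `v k` form an orthonormal basis (more generally, a Parseval frame) of that span. -/
def ResolvesProjection (v : κ → m → ℂ) (S : Finset m) : Prop :=
  ∑ k, vecMulVec (v k) (star (v k)) = diagonal fun i => if i ∈ S then 1 else 0

theorem resolvesProjection_single (i : m) :
    ResolvesProjection (fun _ : Unit => Pi.single i 1) {i} := by
  ext x y
  simp only [Finset.univ_unique, Finset.sum_const, Finset.card_singleton, one_smul,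
    vecMulVec_apply, Pi.star_apply, Pi.single_apply, diagonal_apply, Finset.mem_singleton]
  split_ifs <;> simp_all

/-- The orthonormal basis of `span {|i⟩, |j⟩}` obtained from `|i⟩, |j⟩` by a rotation by the
angle `t`. -/
noncomputable def rotatedPair (t : ℝ) (i j : m) : Fin 2 → m → ℂ :=
  ![(Real.cos t : ℂ) • Pi.single i 1 + (Real.sin t : ℂ) • Pi.single j 1,
    -(Real.sin t : ℂ) • Pi.single i 1 + (Real.cos t : ℂ) • Pi.single j 1]

theorem resolvesProjection_rotatedPair (t : ℝ) {i j : m} (hij : i ≠ j) :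
    ResolvesProjection (rotatedPair t i j) {i, j} := by
  have hcs : (Real.cos t : ℂ) ^ 2 + (Real.sin t : ℂ) ^ 2 = 1 := by
    exact_mod_cast Real.cos_sq_add_sin_sq t
  have hrot (x₁ x₂ y₁ y₂ : ℂ) :
      (Real.cos t * x₁ + Real.sin t * x₂) * (Real.cos t * y₁ + Real.sin t * y₂) +
        (-Real.sin t * x₁ + Real.cos t * x₂) * (-Real.sin t * y₁ + Real.cos t * y₂) =
      x₁ * y₁ + x₂ * y₂ := by
    linear_combination (x₁ * y₁ + x₂ * y₂) * hcs
  ext x y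
  simp only [Fin.sum_univ_two, Matrix.add_apply, vecMulVec_apply, rotatedPair, diagonal_apply,
    Matrix.cons_val_zero, Matrix.cons_val_one, Pi.star_apply, Pi.add_apply, Pi.smul_apply,
    smul_eq_mul, star_add, star_mul', star_neg, RCLike.star_def, Complex.conj_ofReal, hrot,
    Finset.mem_insert, Finset.mem_singleton, Pi.single_apply]
  split_ifs <;> simp_all

variable [Fintype m]

theorem ResolvesProjection.sum_norm_sq_dotProduct {v : κ → m → ℂ} {S : Finset m}
    (hv : ResolvesProjection v S) (x : m → ℂ) :
    ∑ k, ‖x ⬝ᵥ v k‖ ^ 2 = ∑ i ∈ S, ‖x i‖ ^ 2 := by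
  have hnorm (z : ℂ) : ((‖z‖ ^ 2 : ℝ) : ℂ) = z * star z := by
    simp [Complex.mul_conj, Complex.normSq_eq_norm_sq]
  have hterm (k : κ) :
      ((‖x ⬝ᵥ v k‖ ^ 2 : ℝ) : ℂ) = x ⬝ᵥ vecMulVec (v k) (star (v k)) *ᵥ star x := by
    rw [hnorm, vecMulVec_mulVec, star_dotProduct_star, op_smul_eq_smul, dotProduct_smul,
      smul_eq_mul, mul_comm]
  apply Complex.ofReal_injective
  rw [Complex.ofReal_sum, Finset.sum_congr rfl fun k _ => hterm k, ← dotProduct_sum,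
    ← sum_mulVec, hv]
  simp [dotProduct, mulVec_diagonal, hnorm]

theorem ResolvesProjection.sum_norm_sq_star_dotProduct {v : κ → m → ℂ} {S : Finset m}
    (hv : ResolvesProjection v S) (x : m → ℂ) :
    ∑ k, ‖star (v k) ⬝ᵥ x‖ ^ 2 = ∑ i ∈ S, ‖x i‖ ^ 2 := by
  have hstar (k : κ) : ‖star (v k) ⬝ᵥ x‖ = ‖star x ⬝ᵥ v k‖ := by
    rw [star_dotProduct, norm_star]
  simpa only [hstar, Pi.star_apply, norm_star] using hv.sum_norm_sq_dotProduct (star x)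

theorem ResolvesProjection.sum_star_dotProduct_mulVec {v : κ → m → ℂ} {S : Finset m}
    (hv : ResolvesProjection v S) (M : Matrix m m ℂ) :
    ∑ k, star (v k) ⬝ᵥ M *ᵥ v k = ∑ i ∈ S, M i i := by
  calc _ = (M * ∑ k, vecMulVec (v k) (star (v k))).trace := by
        simp only [Matrix.mul_sum, trace_sum, mul_vecMulVec, trace_vecMulVec,
          dotProduct_comm (star _)]
    _ = _ := by
        rw [hv]
        simp [trace]

end ResolvesProjection

theorem opNorm_le_re_trace {n : ℕ} {M : Matrix (Fin n) (Fin n) ℂ} (hM : M.PosSemidef) :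
    opNorm M ≤ M.trace.re := by
  open scoped MatrixOrder Matrix.Norms.L2Operator in
  rcases subsingleton_or_nontrivial (Matrix (Fin n) (Fin n) ℂ) with _ | _
  · simp [opNorm, Subsingleton.elim M 0]
  obtain ⟨i, hi⟩ : ‖M‖ ∈ Set.range hM.isHermitian.eigenvalues :=
    hM.isHermitian.spectrum_real_eq_range_eigenvalues ▸
      CStarAlgebra.norm_mem_spectrum_of_nonneg hM.nonneg
  calc opNorm M = hM.isHermitian.eigenvalues i := hi.symm
    _ ≤ ∑ j, hM.isHermitian.eigenvalues j :=
      Finset.single_le_sum (fun j _ => hM.eigenvalues_nonneg j) (Finset.mem_univ i)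
    _ = M.trace.re := by simp [hM.isHermitian.trace_eq_sum_eigenvalues]

section Disturbance

theorem disturbance_nonneg {n dA dB : ℕ} (ψ : Fin n → Fin dA × Fin dB → ℂ)
    (a : Matrix (Fin dA) (Fin dA) ℂ) (b : Matrix (Fin dB) (Fin dB) ℂ) :
    0 ≤ disturbance ψ a b :=
  Real.iSup_nonneg fun _ => by positivity

theorem norm_sq_le_disturbance_sq_mul {n dA dB : ℕ} {ψ : Fin n → Fin dA × Fin dB → ℂ}
    {a : Matrix (Fin dA) (Fin dA) ℂ} {b : Matrix (Fin dB) (Fin dB) ℂ}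
    (ha : a.PosSemidef) (hb : b.PosSemidef)
    (hnz : ∀ i, star (ψ i) ⬝ᵥ (a ⊗ₖ b) *ᵥ ψ i ≠ 0) {i j : Fin n} (hij : i ≠ j) :
    ‖star (ψ i) ⬝ᵥ (a ⊗ₖ b) *ᵥ ψ j‖ ^ 2 ≤ disturbance ψ a b ^ 2 *
      ((star (ψ i) ⬝ᵥ (a ⊗ₖ b) *ᵥ ψ i).re * (star (ψ j) ⬝ᵥ (a ⊗ₖ b) *ᵥ ψ j).re) := by
  have hpos (i : Fin n) : 0 < (star (ψ i) ⬝ᵥ (a ⊗ₖ b) *ᵥ ψ i).re :=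
    (Complex.pos_iff.1 <|
      ((ha.kronecker hb).dotProduct_mulVec_nonneg (ψ i)).lt_of_ne (hnz i).symm).1
  have hprod := mul_pos (hpos i) (hpos j)
  have hle : ‖star (ψ i) ⬝ᵥ (a ⊗ₖ b) *ᵥ ψ j‖ / Real.sqrt
      ((star (ψ i) ⬝ᵥ (a ⊗ₖ b) *ᵥ ψ i).re * (star (ψ j) ⬝ᵥ (a ⊗ₖ b) *ᵥ ψ j).re) ≤
      disturbance ψ a b := by
    exact le_ciSup_of_le (Set.finite_range _).bddAbove ⟨(i, j), hij⟩ le_rfl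
  rw [div_le_iff₀ (Real.sqrt_pos.2 hprod)] at hle
  rw [← Real.sq_sqrt hprod.le, ← mul_pow]
  exact pow_le_pow_left₀ (norm_nonneg _) hle 2

theorem star_kp_dotProduct_kronecker_mulVec_kp (a b : Matrix (Fin 3) (Fin 3) ℂ)
    (α β γ ζ : Fin 3 → ℂ) :
    star (kp α β) ⬝ᵥ (a ⊗ₖ b) *ᵥ kp γ ζ = (star α ⬝ᵥ a *ᵥ γ) * (star β ⬝ᵥ b *ᵥ ζ) := by
  simp only [kp, dotProduct, mulVec, kroneckerMap_apply, Fintype.sum_prod_type,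
    Fin.sum_univ_three, Pi.star_apply, star_mul']
  ring

variable {m n : Type*}

theorem re_apply_self_nonneg {M : Matrix m m ℂ} (hM : M.PosSemidef) (i : m) : 0 ≤ (M i i).re :=
  (Complex.nonneg_iff.1 hM.diag_nonneg).1

variable [Fintype m] [Fintype n]

/-- The operator `M ⊗ N` disturbs the product vectors `α ⊗ β` and `γ ⊗ ζ` by at most `d`. The
condition is written without square roots and quotients, and in terms of the factors, so that it
can be summed over bases of either factor. -/
def DisturbedBy (M : Matrix m m ℂ) (N : Matrix n n ℂ) (d : ℝ) (α : m → ℂ) (β : n → ℂ)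
    (γ : m → ℂ) (ζ : n → ℂ) : Prop :=
  ‖star α ⬝ᵥ M *ᵥ γ‖ ^ 2 * ‖star β ⬝ᵥ N *ᵥ ζ‖ ^ 2 ≤
    d ^ 2 * ((star α ⬝ᵥ M *ᵥ α).re * (star β ⬝ᵥ N *ᵥ β).re *
      ((star γ ⬝ᵥ M *ᵥ γ).re * (star ζ ⬝ᵥ N *ᵥ ζ).re))

theorem DisturbedBy.swap {M : Matrix m m ℂ} {N : Matrix n n ℂ} {d : ℝ} {α γ : m → ℂ}
    {β ζ : n → ℂ} (h : DisturbedBy M N d α β γ ζ) : DisturbedBy N M d β α ζ γ := by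
  unfold DisturbedBy at h ⊢
  linarith

theorem disturbedBy_of_norm_sq_kp_le {M N : Matrix (Fin 3) (Fin 3) ℂ} (hM : M.IsHermitian)
    {d : ℝ} {α β γ ζ : Fin 3 → ℂ}
    (h : ‖star (kp α β) ⬝ᵥ (M ⊗ₖ N) *ᵥ kp γ ζ‖ ^ 2 ≤
      d ^ 2 * ((star (kp α β) ⬝ᵥ (M ⊗ₖ N) *ᵥ kp α β).re *
        (star (kp γ ζ) ⬝ᵥ (M ⊗ₖ N) *ᵥ kp γ ζ).re)) :
    DisturbedBy M N d α β γ ζ := by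
  have him (v : Fin 3 → ℂ) : (star v ⬝ᵥ M *ᵥ v).im = 0 := hM.im_star_dotProduct_mulVec_self v
  simpa only [DisturbedBy, star_kp_dotProduct_kronecker_mulVec_kp, norm_mul, mul_pow,
    Complex.mul_re, him, zero_mul, sub_zero] using h

variable [DecidableEq m] [DecidableEq n]

theorem star_single_dotProduct_mulVec_single (M : Matrix m m ℂ) (i j : m) :
    star (Pi.single i 1) ⬝ᵥ M *ᵥ Pi.single j 1 = M i j := by
  simp

theorem sum_norm_sq_mul_sum_norm_sq_le {ι κ : Type*} [Fintype ι] [Fintype κ]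
    {M : Matrix m m ℂ} {N : Matrix n n ℂ} {d : ℝ} {w : ι → m → ℂ} {u : κ → n → ℂ}
    {I : Finset m} {K : Finset n} (hw : ResolvesProjection w I) (hu : ResolvesProjection u K)
    {p : m} {q : n}
    (h : ∀ i k, DisturbedBy M N d (w i) (Pi.single q 1) (Pi.single p 1) (u k)) :
    (∑ i ∈ I, ‖M i p‖ ^ 2) * ∑ k ∈ K, ‖N q k‖ ^ 2 ≤
      d ^ 2 * ((∑ i ∈ I, (M i i).re) * (N q q).re *
        ((M p p).re * ∑ k ∈ K, (N k k).re)) := by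
  have hNq (v : n → ℂ) : star (Pi.single q 1) ⬝ᵥ N *ᵥ v = N q ⬝ᵥ v := by
    simp [mulVec]
  simp only [DisturbedBy, star_single_dotProduct_mulVec_single] at h
  simp only [hNq, mulVec_single_one] at h
  calc _ = ∑ i, ∑ k, ‖star (w i) ⬝ᵥ M.col p‖ ^ 2 * ‖N q ⬝ᵥ u k‖ ^ 2 := by
        rw [← Finset.sum_mul_sum, hw.sum_norm_sq_star_dotProduct, hu.sum_norm_sq_dotProduct]
        rfl
    _ ≤ ∑ i, ∑ k, d ^ 2 * ((star (w i) ⬝ᵥ M *ᵥ w i).re * (N q q).re *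
          ((M p p).re * (star (u k) ⬝ᵥ N *ᵥ u k).re)) := by
        exact Finset.sum_le_sum fun i _ => Finset.sum_le_sum fun k _ => h i k
    _ = d ^ 2 * ((∑ i, star (w i) ⬝ᵥ M *ᵥ w i).re * (N q q).re *
          ((M p p).re * (∑ k, star (u k) ⬝ᵥ N *ᵥ u k).re)) := by
        simp only [← Finset.mul_sum, ← Finset.sum_mul, Complex.re_sum]
    _ = _ := by
        rw [hw.sum_star_dotProduct_mulVec, hu.sum_star_dotProduct_mulVec, Complex.re_sum,
          Complex.re_sum]

theorem norm_sq_apply_mul_sq_le {ι κ : Type*} [Fintype ι] [Fintype κ]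
    {M : Matrix m m ℂ} {N : Matrix n n ℂ} {d : ℝ} {w : ι → m → ℂ} {u : κ → n → ℂ}
    {I : Finset m} {K : Finset n} (hw : ResolvesProjection w I) (hu : ResolvesProjection u K)
    {c p : m} {q : n} (hc : c ∈ I) (hq : q ∈ K)
    (h : ∀ i k, DisturbedBy M N d (w i) (Pi.single q 1) (Pi.single p 1) (u k)) :
    ‖M c p‖ ^ 2 * (N q q).re ^ 2 ≤
      d ^ 2 * ((∑ i ∈ I, (M i i).re) * (N q q).re *
        ((M p p).re * ∑ k ∈ K, (N k k).re)) :=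
  calc ‖M c p‖ ^ 2 * (N q q).re ^ 2 ≤ ‖M c p‖ ^ 2 * ‖N q q‖ ^ 2 := by
        rw [← sq_abs (N q q).re]
        gcongr
        exact Complex.abs_re_le_norm _
    _ ≤ (∑ i ∈ I, ‖M i p‖ ^ 2) * ∑ k ∈ K, ‖N q k‖ ^ 2 := by
        gcongr
        · exact Finset.single_le_sum (f := fun i => ‖M i p‖ ^ 2) (fun _ _ => by positivity) hc
        · exact Finset.single_le_sum (f := fun k => ‖N q k‖ ^ 2) (fun _ _ => by positivity) hq
    _ ≤ _ := sum_norm_sq_mul_sum_norm_sq_le hw hu h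

theorem le_mul_of_sq_mul_sq_le {x d S P q R T : ℝ} (hd : 0 ≤ d) (hS : 0 ≤ S) (hP : 0 ≤ P)
    (hq : 0 < q) (hR : R ≤ 2 * q) (hT : S + P ≤ T)
    (h : x ^ 2 * q ^ 2 ≤ d ^ 2 * (S * q * (P * R))) : x ≤ d * T := by
  have hsq : x ^ 2 ≤ 2 * d ^ 2 * (S * P) := by
    refine le_of_mul_le_mul_right (h.trans ?_) (pow_pos hq 2)
    calc _ ≤ d ^ 2 * (S * q * (P * (2 * q))) := by gcongr
      _ = _ := by ring
  refine (le_of_sq_le_sq (b := d * (S + P)) ?_ (by positivity)).trans (by gcongr)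
  calc x ^ 2 ≤ 2 * d ^ 2 * (S * P) := hsq
    _ ≤ d ^ 2 * (4 * S * P) := by nlinarith [mul_nonneg (sq_nonneg d) (mul_nonneg hS hP)]
    _ ≤ (d * (S + P)) ^ 2 := by
      rw [mul_pow]
      gcongr
      exact four_mul_le_sq_add S P

theorem norm_apply_le_mul_re_trace {ι κ : Type*} [Fintype ι] [Fintype κ]
    {M : Matrix m m ℂ} {N : Matrix n n ℂ} (hM : M.PosSemidef) (hN : N.PosSemidef)
    {d : ℝ} (hd : 0 ≤ d) {w : ι → m → ℂ} {u : κ → n → ℂ} {I : Finset m} {c p : m} {c' r : n}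
    (hc : c ∈ I) (hp : p ∉ I) (hr : c' ≠ r) (hNc : 0 < (N c' c').re)
    (hw : ResolvesProjection w I) (hu : ResolvesProjection u {c', r})
    (hcentre : ∀ k, DisturbedBy M N d (Pi.single c 1) (Pi.single c' 1) (Pi.single p 1) (u k))
    (hcross : ∀ i k, DisturbedBy M N d (w i) (Pi.single r 1) (Pi.single p 1) (u k)) :
    ‖M c p‖ ≤ d * M.trace.re := by
  have hMnonneg := re_apply_self_nonneg hM
  have hcS : (M c c).re ≤ ∑ i ∈ I, (M i i).re :=
    Finset.single_le_sum (f := fun i => (M i i).re) (fun i _ => hMnonneg i) hc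
  have htrace : ∑ i ∈ I, (M i i).re + (M p p).re ≤ M.trace.re := by
    rw [add_comm, ← Finset.sum_insert (f := fun i => (M i i).re) hp, trace, Complex.re_sum]
    exact Finset.sum_le_univ_sum_of_nonneg hMnonneg
  set S := ∑ i ∈ I, (M i i).re
  -- The tile `u` is compared with the centre or with the tile `w`, whichever of the two has the
  -- larger diagonal entry of `N`: that entry then absorbs the trace of `N` over the tile.
  obtain ⟨q, hq, hsum, hle⟩ : ∃ q, 0 < (N q q).re ∧
      (N c' c').re + (N r r).re ≤ 2 * (N q q).re ∧
      ‖M c p‖ ^ 2 * (N q q).re ^ 2 ≤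
        d ^ 2 * (S * (N q q).re * ((M p p).re * ((N c' c').re + (N r r).re))) := by
    rw [← Finset.sum_pair (f := fun k => (N k k).re) hr]
    rcases le_total (N r r).re (N c' c').re with hrc | hcr
    · refine ⟨c', hNc, by rw [Finset.sum_pair hr]; linarith, ?_⟩
      refine (norm_sq_apply_mul_sq_le (resolvesProjection_single c) hu
        (Finset.mem_singleton_self c) (Finset.mem_insert_self c' _) fun _ => hcentre).trans ?_
      rw [Finset.sum_singleton, Finset.sum_pair hr]
      have hNr := re_apply_self_nonneg hN r
      have hMp := hMnonneg p
      gcongr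
    · exact ⟨r, hNc.trans_le hcr, by rw [Finset.sum_pair hr]; linarith,
        norm_sq_apply_mul_sq_le hw hu hc (by simp) hcross⟩
  exact le_mul_of_sq_mul_sq_le hd ((hMnonneg c).trans hcS) (hMnonneg p) hq hsum htrace hle

end Disturbance

section SameTile

variable {m n : Type*} [Fintype m] [Fintype n]

theorem DisturbedBy.norm_le_of_same_right {M : Matrix m m ℂ} {N : Matrix n n ℂ}
    (hM : M.PosSemidef) {d : ℝ} (hd : 0 ≤ d) {α γ : m → ℂ} {β : n → ℂ}
    (hβ : 0 < (star β ⬝ᵥ N *ᵥ β).re) (h : DisturbedBy M N d α β γ β) :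
    ‖star α ⬝ᵥ M *ᵥ γ‖ ≤ d / 2 * ((star α ⬝ᵥ M *ᵥ α).re + (star γ ⬝ᵥ M *ᵥ γ).re) := by
  have hnonneg (v : m → ℂ) : 0 ≤ (star v ⬝ᵥ M *ᵥ v).re := hM.re_dotProduct_nonneg v
  have hα := hnonneg α
  have hγ := hnonneg γ
  have hsq : ‖star α ⬝ᵥ M *ᵥ γ‖ ^ 2 ≤
      d ^ 2 * ((star α ⬝ᵥ M *ᵥ α).re * (star γ ⬝ᵥ M *ᵥ γ).re) := by
    refine le_of_mul_le_mul_right ?_ (pow_pos hβ 2)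
    calc _ ≤ ‖star α ⬝ᵥ M *ᵥ γ‖ ^ 2 * ‖star β ⬝ᵥ N *ᵥ β‖ ^ 2 := by
          gcongr
          exact Complex.re_le_norm _
      _ ≤ _ := h
      _ = _ := by ring
  refine le_of_sq_le_sq (hsq.trans ?_) (by positivity)
  rw [mul_pow, div_pow, div_mul_eq_mul_div, ← mul_div_assoc']
  gcongr
  linarith [four_mul_le_sq_add (star α ⬝ᵥ M *ᵥ α).re (star γ ⬝ᵥ M *ᵥ γ).re]

variable [DecidableEq m]

theorem re_rotatedPair_dotProduct_mulVec {M : Matrix m m ℂ} (hM : M.IsHermitian) (t : ℝ)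
    (i j : m) :
    (star (rotatedPair t i j 0) ⬝ᵥ M *ᵥ rotatedPair t i j 1).re =
      Real.sin (2 * t) / 2 * ((M j j).re - (M i i).re) + Real.cos (2 * t) * (M i j).re := by
  have hji : (M j i).re = (M i j).re := by
    rw [← hM.apply i j, RCLike.star_def, Complex.conj_re]
  simp only [rotatedPair, Matrix.cons_val_zero, Matrix.cons_val_one, star_add, star_smul,
    mulVec_add, mulVec_smul, add_dotProduct, dotProduct_add, smul_dotProduct, dotProduct_smul,
    star_single_dotProduct_mulVec_single, RCLike.star_def, Complex.conj_ofReal, smul_eq_mul,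
    ← Complex.ofReal_neg, Complex.add_re, Complex.re_ofReal_mul, hji, Real.sin_two_mul,
    Real.cos_two_mul']
  ring

theorem abs_re_apply_sub_le {M : Matrix m m ℂ} {N : Matrix n n ℂ}
    (hM : M.PosSemidef) {d T t : ℝ} (hd : 0 ≤ d) (ht : Real.sin (2 * t) ≠ 0) {i j : m}
    (hij : i ≠ j) {β : n → ℂ} (hβ : 0 < (star β ⬝ᵥ N *ᵥ β).re)
    (h : DisturbedBy M N d (rotatedPair t i j 0) β (rotatedPair t i j 1) β)
    (hoff : ‖M i j‖ ≤ d * T) (hT : (M i i).re + (M j j).re ≤ T) :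
    |(M j j).re - (M i i).re| ≤ 3 * (d / |Real.sin (2 * t)|) * T := by
  have hsum := congrArg Complex.re
    ((resolvesProjection_rotatedPair t hij).sum_star_dotProduct_mulVec M)
  rw [Fin.sum_univ_two, Finset.sum_pair hij, Complex.add_re, Complex.add_re] at hsum
  have hpair : |(star (rotatedPair t i j 0) ⬝ᵥ M *ᵥ rotatedPair t i j 1).re| ≤ d / 2 * T := by
    refine (Complex.abs_re_le_norm _).trans ((h.norm_le_of_same_right hM hd hβ).trans ?_)
    rw [hsum]
    gcongr
  have hcos : |Real.cos (2 * t) * (M i j).re| ≤ d * T := by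
    rw [abs_mul]
    exact (mul_le_of_le_one_left (abs_nonneg _) (Real.abs_cos_le_one _)).trans
      ((Complex.abs_re_le_norm _).trans hoff)
  have hsin : |Real.sin (2 * t)| * |(M j j).re - (M i i).re| ≤ 3 * d * T := by
    have heq : Real.sin (2 * t) * ((M j j).re - (M i i).re) =
        2 * ((star (rotatedPair t i j 0) ⬝ᵥ M *ᵥ rotatedPair t i j 1).re -
          Real.cos (2 * t) * (M i j).re) := by
      rw [re_rotatedPair_dotProduct_mulVec hM.isHermitian]
      ring
    rw [← abs_mul, heq, abs_mul, abs_two]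
    linarith [abs_sub (star (rotatedPair t i j 0) ⬝ᵥ M *ᵥ rotatedPair t i j 1).re
      (Real.cos (2 * t) * (M i j).re)]
  rw [mul_div_assoc', div_mul_eq_mul_div, le_div_iff₀' (abs_pos.2 ht)]
  exact hsin

end SameTile

section Domino

/-- The labelling of the nine domino states by the centre `none` and the states `some (k, i)` of
the four tiles, where `k` is the position of the angle of the tile. -/
def dominoIndex : Option (Fin 4 × Fin 2) ≃ Fin 9 :=
  finProdFinEquiv.optionCongr.trans (finSuccEquiv 8).symm

/-- The first tensor factors of the rotated domino states with angles `t 0, …, t 3`. -/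
noncomputable def dominoLeft (t : Fin 4 → ℝ) : Option (Fin 4 × Fin 2) → Fin 3 → ℂ
  | none => Pi.single 1 1
  | some (0, _) => Pi.single 0 1
  | some (1, _) => Pi.single 2 1
  | some (2, i) => rotatedPair (t 2) 1 2 i
  | some (3, i) => rotatedPair (t 3) 0 1 i

/-- The second tensor factors of the rotated domino states with angles `t 0, …, t 3`. -/
noncomputable def dominoRight (t : Fin 4 → ℝ) : Option (Fin 4 × Fin 2) → Fin 3 → ℂ
  | none => Pi.single 1 1
  | some (0, i) => rotatedPair (t 0) 0 1 i
  | some (1, i) => rotatedPair (t 1) 1 2 i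
  | some (2, _) => Pi.single 0 1
  | some (3, _) => Pi.single 2 1

theorem rotDomino_dominoIndex (t : Fin 4 → ℝ) (x : Option (Fin 4 × Fin 2)) :
    rotDomino (t 0) (t 1) (t 2) (t 3) (dominoIndex x) = kp (dominoLeft t x) (dominoRight t x) := by
  have he (i : Fin 3) : e3 i = Pi.single i 1 := by
    ext k
    simp [e3, Pi.single_apply]
  rcases x with _ | ⟨k, i⟩
  · simp only [rotDomino, he]
    rfl
  · fin_cases k <;> fin_cases i <;> simp only [rotDomino, he] <;> rfl

variable {a b : Matrix (Fin 3) (Fin 3) ℂ} {t : Fin 4 → ℝ}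

theorem pairwise_disturbedBy_domino (ha : a.PosSemidef) (hb : b.PosSemidef)
    (hnz : ∀ i, star (rotDomino (t 0) (t 1) (t 2) (t 3) i) ⬝ᵥ
      (a ⊗ₖ b) *ᵥ rotDomino (t 0) (t 1) (t 2) (t 3) i ≠ 0) :
    Pairwise fun x y =>
      DisturbedBy a b (disturbance (rotDomino (t 0) (t 1) (t 2) (t 3)) a b)
        (dominoLeft t x) (dominoRight t x) (dominoLeft t y) (dominoRight t y) := by
  intro x y hxy
  apply disturbedBy_of_norm_sq_kp_le ha.isHermitian
  simp only [← rotDomino_dominoIndex]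
  exact norm_sq_le_disturbance_sq_mul ha hb hnz (dominoIndex.injective.ne hxy)

theorem re_apply_self_pos_of_domino (ha : a.PosSemidef) (hb : b.PosSemidef)
    (hnz : ∀ i, star (rotDomino (t 0) (t 1) (t 2) (t 3) i) ⬝ᵥ
      (a ⊗ₖ b) *ᵥ rotDomino (t 0) (t 1) (t 2) (t 3) i ≠ 0) (i : Fin 3) :
    0 < (a i i).re ∧ 0 < (b i i).re := by
  have hpos {M : Matrix (Fin 3) (Fin 3) ℂ} (hM : M.PosSemidef)
      (h : star (Pi.single i 1) ⬝ᵥ M *ᵥ Pi.single i 1 ≠ 0) : 0 < (M i i).re := by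
    rw [star_single_dotProduct_mulVec_single] at h
    exact (Complex.pos_iff.1 (hM.diag_nonneg.lt_of_ne h.symm)).1
  have hfactors (x : Option (Fin 4 × Fin 2)) :
      star (dominoLeft t x) ⬝ᵥ a *ᵥ dominoLeft t x ≠ 0 ∧
        star (dominoRight t x) ⬝ᵥ b *ᵥ dominoRight t x ≠ 0 := by
    have hx := hnz (dominoIndex x)
    rwa [rotDomino_dominoIndex, star_kp_dotProduct_kronecker_mulVec_kp, mul_ne_zero_iff] at hx
  fin_cases i
  · exact ⟨hpos ha (hfactors (some (0, 0))).1, hpos hb (hfactors (some (2, 0))).2⟩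
  · exact ⟨hpos ha (hfactors none).1, hpos hb (hfactors none).2⟩
  · exact ⟨hpos ha (hfactors (some (1, 0))).1, hpos hb (hfactors (some (3, 0))).2⟩

variable {d c : ℝ}

theorem mul_re_trace_le_of_disturbedBy {M N : Matrix (Fin 3) (Fin 3) ℂ} (hM : M.PosSemidef)
    (hd : 0 ≤ d) {t₀ t₂ : ℝ} (ht₀ : Real.sin (2 * t₀) ≠ 0) (ht₂ : Real.sin (2 * t₂) ≠ 0)
    (hc₀ : d / |Real.sin (2 * t₀)| ≤ (1 / 3 - c) / 2)
    (hc₂ : d / |Real.sin (2 * t₂)| ≤ (1 / 3 - c) / 2)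
    {q₀ q₂ : Fin 3} (hq₀ : 0 < (N q₀ q₀).re) (hq₂ : 0 < (N q₂ q₂).re)
    (h₀ : DisturbedBy M N d (rotatedPair t₀ 0 1 0) (Pi.single q₀ 1)
      (rotatedPair t₀ 0 1 1) (Pi.single q₀ 1))
    (h₂ : DisturbedBy M N d (rotatedPair t₂ 1 2 0) (Pi.single q₂ 1)
      (rotatedPair t₂ 1 2 1) (Pi.single q₂ 1))
    (h10 : ‖M 1 0‖ ≤ d * M.trace.re) (h12 : ‖M 1 2‖ ≤ d * M.trace.re) :
    c * M.trace.re ≤ (M 1 1).re := by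
  rw [← star_single_dotProduct_mulVec_single N] at hq₀ hq₂
  have hdiag := re_apply_self_nonneg hM
  have htrace : M.trace.re = (M 0 0).re + (M 1 1).re + (M 2 2).re := by simp [trace_fin_three]
  have hT : 0 ≤ M.trace.re := by linarith [hdiag 0, hdiag 1, hdiag 2]
  have h01 : ‖M 0 1‖ ≤ d * M.trace.re := by rwa [← hM.isHermitian.apply, norm_star]
  have hdiff₀ : |(M 1 1).re - (M 0 0).re| ≤ 3 * ((1 / 3 - c) / 2) * M.trace.re :=
    (abs_re_apply_sub_le hM hd ht₀ (by decide) hq₀ h₀ h01 (by linarith [hdiag 2])).trans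
      (by gcongr)
  have hdiff₂ : |(M 2 2).re - (M 1 1).re| ≤ 3 * ((1 / 3 - c) / 2) * M.trace.re :=
    (abs_re_apply_sub_le hM hd ht₂ (by decide) hq₂ h₂ h12 (by linarith [hdiag 0])).trans
      (by gcongr)
  linarith [(abs_le.1 hdiff₀).1, (abs_le.1 hdiff₂).2]

theorem mul_re_trace_le_of_domino_left (ha : a.PosSemidef) (hb : b.PosSemidef) (hd : 0 ≤ d)
    (ht : ∀ k, Real.sin (2 * t k) ≠ 0)
    (hc : ∀ k, d / |Real.sin (2 * t k)| ≤ (1 / 3 - c) / 2)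
    (hbpos : ∀ i, 0 < (b i i).re)
    (h : Pairwise fun x y =>
      DisturbedBy a b d (dominoLeft t x) (dominoRight t x) (dominoLeft t y) (dominoRight t y)) :
    c * a.trace.re ≤ (a 1 1).re := by
  have h10 : ‖a 1 0‖ ≤ d * a.trace.re :=
    norm_apply_le_mul_re_trace ha hb hd (by simp) (by simp) (by decide) (hbpos 1)
      (resolvesProjection_rotatedPair (t 2) (by decide : (1 : Fin 3) ≠ 2))
      (Finset.pair_comm (0 : Fin 3) 1 ▸ resolvesProjection_rotatedPair (t 0) (by decide))
      (fun k => h (i := none) (j := some (0, k)) (by simp))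
      (fun i k => h (i := some (2, i)) (j := some (0, k)) (by simp))
  have h12 : ‖a 1 2‖ ≤ d * a.trace.re :=
    norm_apply_le_mul_re_trace ha hb hd (by simp) (by simp) (by decide) (hbpos 1)
      (resolvesProjection_rotatedPair (t 3) (by decide : (0 : Fin 3) ≠ 1))
      (resolvesProjection_rotatedPair (t 1) (by decide))
      (fun k => h (i := none) (j := some (1, k)) (by simp))
      (fun i k => h (i := some (3, i)) (j := some (1, k)) (by simp))
  exact mul_re_trace_le_of_disturbedBy ha hd (ht 3) (ht 2) (hc 3) (hc 2) (hbpos 2) (hbpos 0)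
    (h (i := some (3, 0)) (j := some (3, 1)) (by simp))
    (h (i := some (2, 0)) (j := some (2, 1)) (by simp)) h10 h12

theorem mul_re_trace_le_of_domino_right (ha : a.PosSemidef) (hb : b.PosSemidef) (hd : 0 ≤ d)
    (ht : ∀ k, Real.sin (2 * t k) ≠ 0)
    (hc : ∀ k, d / |Real.sin (2 * t k)| ≤ (1 / 3 - c) / 2)
    (hapos : ∀ i, 0 < (a i i).re)
    (h : Pairwise fun x y =>
      DisturbedBy a b d (dominoLeft t x) (dominoRight t x) (dominoLeft t y) (dominoRight t y)) :
    c * b.trace.re ≤ (b 1 1).re := by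
  have h10 : ‖b 1 0‖ ≤ d * b.trace.re :=
    norm_apply_le_mul_re_trace hb ha hd (by simp) (by simp) (by decide) (hapos 1)
      (resolvesProjection_rotatedPair (t 1) (by decide : (1 : Fin 3) ≠ 2))
      (resolvesProjection_rotatedPair (t 2) (by decide))
      (fun k => (h (i := none) (j := some (2, k)) (by simp)).swap)
      (fun i k => (h (i := some (1, i)) (j := some (2, k)) (by simp)).swap)
  have h12 : ‖b 1 2‖ ≤ d * b.trace.re :=
    norm_apply_le_mul_re_trace hb ha hd (by simp) (by simp) (by decide) (hapos 1)
      (resolvesProjection_rotatedPair (t 0) (by decide : (0 : Fin 3) ≠ 1))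
      (Finset.pair_comm (0 : Fin 3) 1 ▸ resolvesProjection_rotatedPair (t 3) (by decide))
      (fun k => (h (i := none) (j := some (3, k)) (by simp)).swap)
      (fun i k => (h (i := some (0, i)) (j := some (3, k)) (by simp)).swap)
  exact mul_re_trace_le_of_disturbedBy hb hd (ht 0) (ht 1) (hc 0) (hc 1) (hapos 0) (hapos 2)
    (h (i := some (0, 0)) (j := some (0, 1)) (by simp)).swap
    (h (i := some (1, 0)) (j := some (1, 1)) (by simp)).swap h10 h12

end Domino

theorem stmt14_general (t : Fin 4 → ℝ) (ht : ∀ k, Real.sin (2 * t k) ≠ 0)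
    {a b : Matrix (Fin 3) (Fin 3) ℂ} (ha : a.PosSemidef) (hb : b.PosSemidef)
    (hnz : ∀ i, star (rotDomino (t 0) (t 1) (t 2) (t 3) i) ⬝ᵥ
      (a ⊗ₖ b) *ᵥ rotDomino (t 0) (t 1) (t 2) (t 3) i ≠ 0) {c : ℝ}
    (hc : ∀ k, disturbance (rotDomino (t 0) (t 1) (t 2) (t 3)) a b / |Real.sin (2 * t k)| ≤
      (1 / 3 - c) / 2) :
    c * a.trace.re ≤ (a 1 1).re ∧ c * b.trace.re ≤ (b 1 1).re :=
  have hd := disturbance_nonneg (rotDomino (t 0) (t 1) (t 2) (t 3)) a b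
  have hdiag := re_apply_self_pos_of_domino ha hb hnz
  have h := pairwise_disturbedBy_domino ha hb hnz
  ⟨mul_re_trace_le_of_domino_left ha hb hd ht hc (fun i => (hdiag i).2) h,
    mul_re_trace_le_of_domino_right ha hb hd ht hc (fun i => (hdiag i).1) h⟩

/-- For the rotated domino states `S₃(θ)`, any `s ≥ 3`, and
`1/r(s) = min{(1/14)(1/3 − 1/s), (1/(2(1+√2·s)))(1/3 − 1/s)}`: if `δ/sin 2θ ≤ 1/r(s)`,
then `a₁₁ ≥ (1/s)·‖a‖_∞` and `b₁₁ ≥ (1/s)·‖b‖_∞`. -/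
theorem stmt14
    (th : ℝ) (hth : 0 < th ∧ th ≤ Real.pi / 4)
    (a b : Matrix (Fin 3) (Fin 3) ℂ) (ha : a.PosSemidef) (hb : b.PosSemidef)
    (hnz : ∀ i, star (rotDomino th th th th i) ⬝ᵥ
      (a ⊗ₖ b).mulVec (rotDomino th th th th i) ≠ 0)
    (s : ℝ) (hs : 3 ≤ s)
    (rinv : ℝ)
    (hrinv : rinv = min ((1 / 14) * (1 / 3 - 1 / s))
      ((1 / (2 * (1 + Real.sqrt 2 * s))) * (1 / 3 - 1 / s)))
    (hsmall : disturbance (rotDomino th th th th) a b / Real.sin (2 * th) ≤ rinv) :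
    (a 1 1).re ≥ (1 / s) * opNorm a ∧ (b 1 1).re ≥ (1 / s) * opNorm b := by
  have hsin : 0 < Real.sin (2 * th) :=
    Real.sin_pos_of_pos_of_lt_pi (by linarith [hth.1]) (by linarith [hth.2, Real.pi_pos])
  have hc : disturbance (rotDomino th th th th) a b / |Real.sin (2 * th)| ≤
      (1 / 3 - 1 / s) / 2 := by
    rw [abs_of_pos hsin]
    linarith [hrinv.trans_le (min_le_left _ _), one_div_le_one_div_of_le three_pos hs]
  exact (stmt14_general (fun _ => th) (fun _ => hsin.ne') ha hb hnz fun _ => hc).imp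
    (mul_le_mul_of_nonneg_left (opNorm_le_re_trace ha) (by positivity)).trans
    (mul_le_mul_of_nonneg_left (opNorm_le_re_trace hb) (by positivity)).trans
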